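/- arXiv:1403.5673 — 2 statements merged into one kernel-verified Lean document; each statement's English description precedes it below -/
import Mathlib

section
/- For every n ≥ 1, every commutative ring A, and every choice of 2n matrices x_1, …, x_{2n} ∈ M_n(A), the standard polynomial evaluates to zero: S_{2n}(x_1, …, x_{2n}) = Σ_{σ ∈ S_{2n}} sgn(σ) · x_{σ(1)} x_{σ(2)} ⋯ x_{σ(2n)} = 0. (Theorem of Amitsur–Levitzki.) -/
/-!
Following Rosset, adjoin anticommuting variables `e₁, …, eₖ` of square zero and put
`X = ∑ i, xᵢ eᵢ`, a matrix over an exterior algebra. In `X ^ k` only the products in which every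
`eᵢ` occurs once survive, and reordering them produces signs, so `X ^ k = Sₖ(x₁, …, xₖ) e₁ ⋯ eₖ`.
The entries of `X` anticommute, so those of `X ^ 2` commute, and
`tr X ^ (2 j) = tr (X * X ^ (2 j - 1)) = -tr (X ^ (2 j - 1) * X) = -tr X ^ (2 j)` vanishes. In the
absence of additive torsion, a matrix `Y` of size `n` over a commutative ring all of whose powers
are traceless satisfies `Y ^ n = 0`; for `Y = X ^ 2` this reads `X ^ (2 n) = 0`.

Torsion is dealt with by multilinearity: the identity need only be checked on matrix units, and
these already live over `ℤ ⊆ ℚ`.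
-/

section TracelessPowers

open Matrix Polynomial

variable {n R : Type*} [Fintype n] [DecidableEq n] [CommRing R]

theorem derivative_det (M : Matrix n n R[X]) :
    derivative M.det = (M.adjugate * M.map derivative).trace := by
  have h_term (σ : Equiv.Perm n) (i : n) :
      ∏ j, M.updateCol i (fun l => derivative (M l i)) (σ j) j =
        (∏ j ∈ Finset.univ.erase i, M (σ j) j) * derivative (M (σ i) i) := by
    rw [← Finset.prod_erase_mul _ _ (Finset.mem_univ i), updateCol_self]
    exact congrArg (· * _) <| Finset.prod_congr rfl fun j hj =>
      updateCol_ne (Finset.ne_of_mem_erase hj)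
  calc
    derivative M.det = ∑ i, (M.updateCol i fun l => derivative (M l i)).det := by
      simp only [det_apply, map_sum, Units.smul_def, derivative_smul, derivative_prod_finset,
        Finset.smul_sum, h_term]
      exact Finset.sum_comm
    _ = (M.adjugate * M.map derivative).trace := by
      simp only [← cramer_apply, cramer_eq_adjugate_mulVec]
      rfl

theorem derivative_charpolyRev (M : Matrix n n R) :
    derivative M.charpolyRev = -(M.map C * (1 - (X : R[X]) • M.map C).adjugate).trace := by
  have h_map : (1 - (X : R[X]) • M.map C).map derivative = -M.map C := by
    ext1 i j
    by_cases h : i = j <;> simp [h]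
  rw [charpolyRev, derivative_det, h_map, mul_neg, trace_neg, trace_mul_comm]

/- Iterating `adj (1 - X M) = χ + X M adj (1 - X M)`, where `χ = det (1 - X M)`, shows that the
derivative of `χ` is divisible by every power of `X`. -/
theorem derivative_charpolyRev_eq_zero_of_trace_pow_eq_zero {M : Matrix n n R}
    (hM : ∀ k ≠ 0, (M ^ k).trace = 0) : derivative M.charpolyRev = 0 := by
  let N : Matrix n n R[X] := M.map C
  let B := (1 - (X : R[X]) • N).adjugate
  have hB : B = M.charpolyRev • 1 + (X : R[X]) • (N * B) := by
    rw [← sub_eq_iff_eq_add, ← smul_mul_assoc, ← one_sub_mul]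
    exact mul_adjugate _
  have hN (k : ℕ) : (N ^ (k + 1)).trace = 0 := by
    rw [show N ^ (k + 1) = C.mapMatrix (M ^ (k + 1)) from (map_pow C.mapMatrix M _).symm,
      RingHom.mapMatrix_apply, ← AddMonoidHom.map_trace, hM _ k.succ_ne_zero, map_zero]
  have h_step (k : ℕ) : (N ^ (k + 1) * B).trace = X * (N ^ (k + 2) * B).trace := by
    conv_lhs => rw [hB]
    rw [mul_add, mul_smul_comm, mul_one, mul_smul_comm, ← mul_assoc, ← pow_succ, trace_add,
      trace_smul, hN, smul_zero, zero_add, trace_smul, smul_eq_mul]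
  have h_trace (k : ℕ) : (N * B).trace = X ^ k * (N ^ (k + 1) * B).trace := by
    induction k with
    | zero => simp
    | succ k ih => rw [ih, h_step, ← mul_assoc, ← pow_succ]
  rw [derivative_charpolyRev, neg_eq_zero]
  ext k
  exact X_pow_dvd_iff.mp (Dvd.intro _ (h_trace (k + 1)).symm) k k.lt_succ_self

theorem charpoly_eq_X_pow_of_trace_pow_eq_zero [IsAddTorsionFree R] {M : Matrix n n R}
    (hM : ∀ k ≠ 0, (M ^ k).trace = 0) : M.charpoly = X ^ Fintype.card n := by
  nontriviality R
  have h_deriv := derivative_charpolyRev_eq_zero_of_trace_pow_eq_zero hM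
  have h_rev : M.charpolyRev = 1 := by
    rw [eq_C_of_derivative_eq_zero h_deriv, coeff_zero_eq_eval_zero, eval_charpolyRev, C_1]
  rw [← reverse_charpoly, reverse, charpoly_natDegree_eq_dim] at h_rev
  rw [← reflect_one, ← h_rev, reflect_reflect]

theorem pow_card_eq_zero_of_trace_pow_eq_zero [IsAddTorsionFree R] {M : Matrix n n R}
    (hM : ∀ k ≠ 0, (M ^ k).trace = 0) : M ^ Fintype.card n = 0 := by
  simpa [charpoly_eq_X_pow_of_trace_pow_eq_zero hM] using aeval_self_charpoly M

end TracelessPowers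

section NoncommutativeEntries

open Matrix

variable {n R : Type*} [Fintype n] [DecidableEq n] [Ring R]

open scoped IsMulCommutative in
theorem pow_card_eq_zero_of_commute_of_trace_pow_eq_zero [IsAddTorsionFree R] {M : Matrix n n R}
    (h_comm : ∀ i j k l, Commute (M i j) (M k l)) (hM : ∀ k ≠ 0, (M ^ k).trace = 0) :
    M ^ Fintype.card n = 0 := by
  let S := Subring.closure (Set.range fun p : n × n => M p.1 p.2)
  have : IsMulCommutative S := Subring.isMulCommutative_closure <| by
    rintro _ ⟨p, rfl⟩ _ ⟨q, rfl⟩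
    exact h_comm ..
  have : IsAddTorsionFree S :=
    Function.Injective.isAddTorsionFree S.subtype.toAddMonoidHom Subtype.val_injective
  let N : Matrix n n S := of fun i j => ⟨M i j, Subring.subset_closure ⟨(i, j), rfl⟩⟩
  have hN (k : ℕ) : S.subtype.mapMatrix (N ^ k) = M ^ k := map_pow S.subtype.mapMatrix N k
  have h_trace (k : ℕ) (hk : k ≠ 0) : (N ^ k).trace = 0 := by
    apply S.subtype_injective
    rw [map_zero, ← hM k hk, ← hN, AddMonoidHom.map_trace]
    rfl
  rw [← hN, pow_card_eq_zero_of_trace_pow_eq_zero h_trace, map_zero]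

theorem semiconjBy_scalar_iff {n R : Type*} [Fintype n] [DecidableEq n] [Semiring R]
    {M : Matrix n n R} {a b : R} :
    SemiconjBy M (scalar n a) (scalar n b) ↔ ∀ i j, SemiconjBy (M i j) a b := by
  simp [SemiconjBy, ← Matrix.ext_iff]

theorem trace_mul_eq_neg_trace_mul {m n R : Type*} [Fintype m] [Fintype n] [Ring R]
    {A : Matrix m n R} {B : Matrix n m R}
    (h : ∀ i j, SemiconjBy (A i j) (B j i) (-B j i)) : (A * B).trace = -(B * A).trace := by
  simp only [trace, diag_apply, mul_apply, ← Finset.sum_neg_distrib]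
  rw [Finset.sum_comm]
  exact Finset.sum_congr rfl fun j _ => Finset.sum_congr rfl fun i _ => by
    rw [h i j, neg_mul]

theorem pow_two_mul_card_eq_zero_of_anticommute [IsAddTorsionFree R] {M : Matrix n n R}
    (hM : ∀ i j k l, SemiconjBy (M i j) (M k l) (-M k l)) : M ^ (2 * Fintype.card n) = 0 := by
  have h_anti (k l : n) : SemiconjBy M (scalar n (M k l)) (-scalar n (M k l)) := by
    rw [← map_neg, semiconjBy_scalar_iff]
    exact fun i j => hM i j k l
  have h_sq (k l : n) : Commute (M ^ 2) (scalar n (M k l)) := by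
    have := (h_anti k l).neg_right.mul_left (h_anti k l)
    rwa [neg_neg, ← pow_two] at this
  have h_sq_entry (i j : n) : Commute M (scalar n ((M ^ 2) i j)) :=
    semiconjBy_scalar_iff.mpr fun k l => (semiconjBy_scalar_iff.mp (h_sq k l) i j).symm
  have h_odd (d : ℕ) (k l : n) :
      SemiconjBy (M ^ (2 * d + 1)) (scalar n (M k l)) (scalar n (-M k l)) := by
    have : Commute (M ^ (2 * d)) (scalar n (M k l)) := pow_mul M 2 d ▸ (h_sq k l).pow_left d
    rw [pow_succ, map_neg]
    exact SemiconjBy.mul_left this.neg_right (h_anti k l)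
  rw [pow_mul]
  refine pow_card_eq_zero_of_commute_of_trace_pow_eq_zero (fun i j k l => ?_) fun d hd => ?_
  · exact semiconjBy_scalar_iff.mp ((h_sq_entry k l).pow_left 2) i j
  · obtain ⟨d, rfl⟩ := Nat.exists_eq_succ_of_ne_zero hd
    rw [← pow_mul, ← self_eq_neg]
    calc
      (M ^ (2 * d + 2)).trace = (M ^ (2 * d + 1) * M).trace := by rw [← pow_succ]
      _ = -(M * M ^ (2 * d + 1)).trace :=
        trace_mul_eq_neg_trace_mul fun i j => semiconjBy_scalar_iff.mp (h_odd d j i) i j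
      _ = -(M ^ (2 * d + 2)).trace := by rw [← pow_succ']

end NoncommutativeEntries

section StandardPolynomial

open Matrix

/-- The standard polynomial `Sₖ(x₁, …, xₖ) = ∑ σ, sgn σ • x_{σ 1} ⋯ x_{σ k}` on an `R`-algebra `A`,
as an alternating `R`-multilinear map, the alternatization of the `k`-fold product. -/
noncomputable def standardPolynomial (R A : Type*) [CommSemiring R] [Ring A] [Algebra R A] (k : ℕ) :
    A [⋀^Fin k]→ₗ[R] A :=
  MultilinearMap.alternatization (MultilinearMap.mkPiAlgebraFin R k A)

theorem standardPolynomial_apply (R : Type*) {A : Type*} [CommSemiring R] [Ring A] [Algebra R A]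
    {k : ℕ} (x : Fin k → A) :
    standardPolynomial R A k x =
      ∑ σ : Equiv.Perm (Fin k), Equiv.Perm.sign σ • (List.ofFn fun i => x (σ i)).prod := by
  simp [standardPolynomial, MultilinearMap.alternatization_apply]

theorem map_standardPolynomial (R S : Type*) {A B : Type*} [CommSemiring R] [CommSemiring S]
    [Ring A] [Ring B] [Algebra R A] [Algebra S B] (f : A →+* B) {k : ℕ} (x : Fin k → A) :
    f (standardPolynomial R A k x) = standardPolynomial S B k fun i => f (x i) := by
  simp [standardPolynomial_apply, Units.smul_def, map_list_prod, List.map_ofFn, Function.comp_def]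

theorem sum_pow_eq_sum_prod_ofFn {ι R : Type*} [Fintype ι] [Semiring R] (y : ι → R) (k : ℕ) :
    (∑ i, y i) ^ k = ∑ f : Fin k → ι, (List.ofFn fun i => y (f i)).prod := by
  classical
  have := (MultilinearMap.mkPiAlgebraFin ℕ k R).map_sum fun _ => y
  simpa using this

theorem prod_ofFn_map_smul {n A E : Type*} [Fintype n] [DecidableEq n] [CommSemiring A]
    [Semiring E] [Algebra A E] {k : ℕ} (x : Fin k → Matrix n n A) (e : Fin k → E) :
    (List.ofFn fun i => (x i).map (· • e i)).prod =
      (List.ofFn x).prod.map (· • (List.ofFn e).prod) := by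
  induction k with
  | zero => ext i j; simp [one_apply, apply_ite (· • (1 : E))]
  | succ k ih =>
    ext i j
    simp [List.ofFn_succ, ih, mul_apply, Finset.sum_smul, smul_smul, mul_comm]

variable {n A : Type*} [Fintype n] [DecidableEq n] [CommRing A]

theorem ι_semiconjBy_neg {V : Type*} [AddCommGroup V] [Module A V] (u v : V) :
    SemiconjBy (ExteriorAlgebra.ι A u) (ExteriorAlgebra.ι A v) (-ExteriorAlgebra.ι A v) := by
  rw [SemiconjBy, neg_mul]
  exact eq_neg_of_add_eq_zero_left (ExteriorAlgebra.ι_add_mul_swap u v)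

open ExteriorAlgebra in
theorem sum_map_smul_ι_pow {V : Type*} [AddCommGroup V] [Module A V] {k : ℕ}
    (x : Fin k → Matrix n n A) (v : Fin k → V) :
    (∑ i, (x i).map (· • ι A (v i))) ^ k =
      (standardPolynomial A (Matrix n n A) k x).map (· • ιMulti A k v) := by
  calc
    _ = ∑ f : Fin k → Fin k, (List.ofFn (x ∘ f)).prod.map (· • ιMulti A k (v ∘ f)) := by
      rw [sum_pow_eq_sum_prod_ofFn]
      exact Finset.sum_congr rfl fun f _ => prod_ofFn_map_smul _ _
    _ = ∑ σ : Equiv.Perm (Fin k), (List.ofFn (x ∘ σ)).prod.map (· • ιMulti A k (v ∘ σ)) := by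
      refine (Fintype.sum_of_injective _ DFunLike.coe_injective _ _ (fun f hf => ?_)
        fun _ => rfl).symm
      have hf_inj : ¬ Function.Injective f := fun h =>
        hf ⟨Equiv.ofBijective f (Finite.injective_iff_bijective.mp h), rfl⟩
      have h_zero : ιMulti A k (v ∘ f) = 0 :=
        ιMulti_eq_zero_of_not_inj fun h => hf_inj h.of_comp
      ext i j
      simp [h_zero]
    _ = (standardPolynomial A (Matrix n n A) k x).map (· • ιMulti A k v) := by
      ext i j
      simp only [standardPolynomial_apply, Matrix.sum_apply, map_apply, Finset.sum_smul]
      refine Finset.sum_congr rfl fun σ _ => ?_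
      rw [AlternatingMap.map_perm, smul_comm, ← smul_assoc]
      rfl

theorem smul_ιMulti_piSingle_injective (k : ℕ) :
    Function.Injective fun a : A =>
      a • ExteriorAlgebra.ιMulti A k fun i => (Pi.single i 1 : Fin k → A) := by
  let φ := ExteriorAlgebra.liftAlternating (R := A) (M := Fin k → A) (N := A) <|
    Pi.single k detRowAlternating
  refine Function.LeftInverse.injective (g := φ) fun a => ?_
  have h_one : (of fun i => Pi.single i 1) = (1 : Matrix (Fin k) (Fin k) A) := by
    ext i j
    simp [one_apply, Pi.single_apply, eq_comm]
  have h_det : detRowAlternating (fun i => Pi.single i 1 : Fin k → Fin k → A) = 1 :=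
    (congrArg det h_one).trans det_one
  simp [φ, h_det]

end StandardPolynomial

section AmitsurLevitzki

open Matrix

variable {n : Type*} [Fintype n] [DecidableEq n] {k : ℕ}

theorem standardPolynomial_matrix_eq_zero_of_algebra_rat {A : Type*} [CommRing A] [Algebra ℚ A]
    (hk : 2 * Fintype.card n ≤ k) (x : Fin k → Matrix n n A) :
    standardPolynomial A (Matrix n n A) k x = 0 := by
  let E := ExteriorAlgebra A (Fin k → A)
  have : IsAddTorsionFree E := .of_module_rat E
  let e : Fin k → Fin k → A := fun i => Pi.single i 1
  let M : Matrix n n E := ∑ i, (x i).map (· • ExteriorAlgebra.ι A (e i))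
  have hM (i j : n) : M i j = ExteriorAlgebra.ι A (∑ l, x l i j • e l) := by
    simp [M, Matrix.sum_apply]
  have h_nil : M ^ (2 * Fintype.card n) = 0 :=
    pow_two_mul_card_eq_zero_of_anticommute fun i j k l => by
      simp only [hM]
      exact ι_semiconjBy_neg _ _
  have h_pow := pow_eq_zero_of_le hk h_nil
  rw [sum_map_smul_ι_pow] at h_pow
  ext i j
  apply smul_ιMulti_piSingle_injective k
  simpa using congrFun₂ h_pow i j

theorem amitsur_levitzki_general {A : Type*} [CommRing A] (hk : 2 * Fintype.card n ≤ k) :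
    standardPolynomial A (Matrix n n A) k = 0 := by
  have h_int (y : Fin k → Matrix n n ℤ) : standardPolynomial ℤ (Matrix n n ℤ) k y = 0 := by
    have h_inj : Function.Injective ((Int.castRingHom ℚ).mapMatrix (m := n)) :=
      Matrix.map_injective (Int.castRingHom ℚ).injective_int
    rw [← map_eq_zero_iff _ h_inj, map_standardPolynomial ℤ ℚ]
    exact standardPolynomial_matrix_eq_zero_of_algebra_rat hk _
  refine (Matrix.stdBasis A n n).ext_alternating fun v _ => ?_
  have h_unit (p : n × n) : Matrix.stdBasis A n n p =
      (Int.castRingHom A).mapMatrix (Matrix.single p.1 p.2 1) := by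
    rw [stdBasis_eq_single, RingHom.mapMatrix_apply, map_single, map_one]
  simp only [h_unit]
  rw [← map_standardPolynomial ℤ, h_int, map_zero, AlternatingMap.zero_apply]

end AmitsurLevitzki

/-- **Amitsur–Levitzki theorem.** For every `n ≥ 1`, every commutative ring `A`, and every
choice of `2n` matrices `x 1, …, x (2n)` in `Mₙ(A)`, the standard polynomial of degree `2n`
evaluates to zero: `∑ σ ∈ S_{2n}, sgn σ • x_{σ 1} ⋯ x_{σ (2n)} = 0`. -/
theorem amitsur_levitzki (n : ℕ) (hn : 1 ≤ n) (A : Type*) [CommRing A]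
    (x : Fin (2 * n) → Matrix (Fin n) (Fin n) A) :
    ∑ σ : Equiv.Perm (Fin (2 * n)),
      ((Equiv.Perm.sign σ : ℤˣ) : ℤ) • (List.ofFn fun i : Fin (2 * n) => x (σ i)).prod = 0 := by
  have h := DFunLike.congr_fun
    (amitsur_levitzki_general (n := Fin n) (A := A) (k := 2 * n) (by simp)) x
  rwa [standardPolynomial_apply, AlternatingMap.zero_apply] at h
end

section
/- For every field F and every n ≥ 1, there exist m ≥ 1 and an element f of the free associative algebra F⟨x_1, …, x_m⟩ with zero constant term such that: (1) for every m-tuple of matrices a_1, …, a_m ∈ M_n(F), the evaluation f(a_1, …, a_m) is a scalar matrix (a scalar multiple of the identity matrix), and (2) f is not a polynomial identity of M_n(F), i.e. there exist a_1, …, a_m ∈ M_n(F) with f(a_1, …, a_m) ≠ 0. (Existence of central polynomials for matrices, Formanek–Razmyslov.) -/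
/-!
Formanek's weight assigns to `x` a multilinear expression `formanek x y` in `y₀, …, yₙ`. When `x`
is diagonal with entries `l` and the `yᵢ` are matrix units, each word
`x ^ α₀ y₀ x ^ α₁ ⋯ yₙ x ^ β` is the product `y₀ ⋯ yₙ` times a monomial in the entries of `l`.
The weight annihilates every word except those running once around a cycle through all the
indices, and summing over the cyclic rotations turns the surviving matrix unit into a scalar
matrix, whose entry is the discriminant of `l` up to sign. By multilinearity `formanek x y` is
central for all `y`. Conjugation carries this over to every `x` with separable characteristic
polynomial over an algebraically closed field. The generic integer matrix is of this kind, so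
centrality is an identity of generic matrices and specializes to all commutative rings. The
polynomial does not vanish because every field has a matrix with separable characteristic
polynomial.
-/

open Matrix Polynomial

section DistinctDifferences

variable {R ι : Type*} [CommRing R] [Fintype ι]

/-- The product of all differences `t i - t j` with `i ≠ j`, i.e. the discriminant of
`∏ i, (X - t i)` up to sign. -/
def diffProd (t : ι → R) : R :=
  ∏ p ∈ Finset.univ.offDiag, (t p.1 - t p.2)

theorem diffProd_comp_equiv (t : ι → R) (e : Equiv.Perm ι) : diffProd (t ∘ e) = diffProd t :=
  Finset.prod_equiv (e.prodCongr e) (by simp) (by simp)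

theorem diffProd_eq_zero {t : ι → R} (ht : ¬ Function.Injective t) : diffProd t = 0 := by
  obtain ⟨i, j, hij, hne⟩ := Function.not_injective_iff.1 ht
  exact Finset.prod_eq_zero (i := (i, j)) (by simpa using hne) (sub_eq_zero.2 hij)

theorem diffProd_ne_zero [IsDomain R] {t : ι → R} (ht : Function.Injective t) :
    diffProd t ≠ 0 :=
  Finset.prod_ne_zero_iff.2 fun _ hp ↦ sub_ne_zero.2 (ht.ne (Finset.mem_offDiag.1 hp).2.2)

end DistinctDifferences

section Words

/-- For `g = ∑ c_α X^α`, the multilinear map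
`(y₀, …, yₙ₋₁) ↦ ∑ c_α • x ^ α₀ y₀ x ^ α₁ y₁ ⋯ x ^ αₙ₋₁ yₙ₋₁ x ^ α_none`. The variable `some i`
of `g` stands for the slot just before `y i`, and `none` for the slot after the last `y`. -/
noncomputable def interleave (S : Type*) {A : Type*} [CommRing S] [Ring A] [Algebra S A] {n : ℕ}
    (g : MvPolynomial (Option (Fin n)) ℤ) (x : A) : MultilinearMap S (fun _ : Fin n ↦ A) A :=
  ∑ α ∈ g.support, g.coeff α •
    (LinearMap.mulRight S (x ^ α none)).compMultilinearMap
      ((MultilinearMap.mkPiAlgebraFin S n A).compLinearMap fun i ↦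
        LinearMap.mulLeft S (x ^ α (some i)))

theorem interleave_apply (S : Type*) {A : Type*} [CommRing S] [Ring A] [Algebra S A] {n : ℕ}
    (g : MvPolynomial (Option (Fin n)) ℤ) (x : A) (y : Fin n → A) :
    interleave S g x y = ∑ α ∈ g.support, g.coeff α •
      ((List.ofFn fun i ↦ x ^ α (some i) * y i).prod * x ^ α none) := by
  simp [interleave]

theorem map_interleave {S T A B : Type*} [CommRing S] [CommRing T] [Ring A] [Ring B] [Algebra S A]
    [Algebra T B] {n : ℕ} (φ : A →+* B) (g : MvPolynomial (Option (Fin n)) ℤ) (x : A)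
    (y : Fin n → A) :
    φ (interleave S g x y) = interleave T g (φ x) (φ ∘ y) := by
  simp [interleave_apply, map_list_prod, List.map_ofFn, Function.comp_def]

variable {R ι : Type*} [Fintype ι] [DecidableEq ι] {n : ℕ}

theorem diagonal_mul_single [NonUnitalNonAssocSemiring R] (l : ι → R) (i j : ι) (c : R) :
    diagonal l * single i j c = single i j (l i * c) := by
  ext p q
  rw [diagonal_mul]
  by_cases hp : i = p <;> simp [single_apply, hp]

theorem single_mul_diagonal [NonUnitalNonAssocSemiring R] (l : ι → R) (i j : ι) (c : R) :
    single i j c * diagonal l = single i j (c * l j) := by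
  ext p q
  rw [mul_diagonal]
  by_cases hq : j = q <;> simp [single_apply, hq]

theorem list_prod_ofFn_single [CommSemiring R] (a b : Fin (n + 1) → ι) (c : Fin (n + 1) → R) :
    (List.ofFn fun i ↦ single (a i) (b i) (c i)).prod =
      if ∀ i : Fin n, b i.castSucc = a i.succ then single (a 0) (b (Fin.last n)) (∏ i, c i)
      else 0 := by
  induction n with
  | zero => simp
  | succ n ih =>
    rw [List.ofFn_succ, List.prod_cons, ih]
    simp only [Fin.forall_fin_succ (n := n), Fin.castSucc_zero, ← Fin.succ_castSucc]
    by_cases h₀ : b 0 = a (Fin.succ 0)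
    · simp [h₀, Fin.prod_univ_succ c]
    · simp [show ¬ b 0 = a 1 from h₀]

theorem interleave_diagonal_single [CommRing R] (g : MvPolynomial (Option (Fin (n + 1))) ℤ)
    (l : ι → R) (a b : Fin (n + 1) → ι) :
    interleave R g (diagonal l) (fun i ↦ single (a i) (b i) 1) =
      if ∀ i : Fin n, b i.castSucc = a i.succ then
        MvPolynomial.aeval (fun o : Option (Fin (n + 1)) ↦ l (o.elim (b (Fin.last n)) a)) g •
          single (a 0) (b (Fin.last n)) 1
      else 0 := by
  simp only [interleave_apply, diagonal_pow, diagonal_mul_single, list_prod_ofFn_single]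
  split_ifs
  · simp only [single_mul_diagonal, MvPolynomial.aeval_def, MvPolynomial.eval₂_eq',
      Fintype.prod_option, Finset.sum_smul]
    simp [mul_comm]
  · simp

end Words

section Formanek

variable {n : ℕ}

/-- Formanek's weight, up to sign: the product of the differences `t i - t j` over `i ≠ j`, in which
the first entry `t 0` of each pair `(0, j)` is replaced by the variable `none` of the slot after the
last `y`. This forces that slot to carry the same eigenvalue as the slot `0`. -/
noncomputable def formanekWeight (n : ℕ) : MvPolynomial (Option (Fin (n + 1))) ℤ :=
  ∏ p ∈ (Finset.univ : Finset (Fin (n + 1))).offDiag,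
    (MvPolynomial.X (if p.1 = 0 then none else some p.1) - MvPolynomial.X (some p.2))

theorem aeval_formanekWeight {R : Type*} [CommRing R] (l : Fin (n + 1) → R)
    (a : Fin (n + 1) → Fin (n + 1)) (b : Fin (n + 1)) :
    MvPolynomial.aeval (fun o : Option (Fin (n + 1)) ↦ l (o.elim b a)) (formanekWeight n) =
      if b = a 0 then diffProd (l ∘ a) else 0 := by
  simp only [formanekWeight, map_prod, map_sub, MvPolynomial.aeval_X, Option.elim_some]
  split_ifs with hb
  · refine Finset.prod_congr rfl fun p _ ↦ ?_
    split_ifs with hp <;> simp [hb, hp]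
  suffices ∃ i j, i ≠ j ∧ (if i = 0 then b else a i) = a j by
    obtain ⟨i, j, hij, h⟩ := this
    refine Finset.prod_eq_zero (i := (i, j)) (by simpa using hij) ?_
    rw [apply_ite (Option.elim · b a)]
    simp [h]
  by_cases ha : Function.Injective a
  · obtain ⟨j, rfl⟩ := Finite.surjective_of_injective ha b
    exact ⟨0, j, fun h ↦ hb (h ▸ rfl), by simp⟩
  · obtain ⟨i, j, hij, hne⟩ := Function.not_injective_iff.1 ha
    by_cases hi : i = 0
    · exact ⟨j, i, hne.symm, by simp [← hi, hne.symm, hij]⟩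
    · exact ⟨i, j, hne, by simp [hi, hij]⟩

theorem interleave_formanekWeight_diagonal_single {R : Type*} [CommRing R] (l : Fin (n + 1) → R)
    (a b : Fin (n + 1) → Fin (n + 1)) :
    interleave R (formanekWeight n) (diagonal l) (fun i ↦ single (a i) (b i) 1) =
      if ∀ i, b i = a (i + 1) then diffProd (l ∘ a) • single (a 0) (a 0) 1 else 0 := by
  rw [interleave_diagonal_single, aeval_formanekWeight]
  simp only [Fin.forall_fin_succ' (P := fun i ↦ b i = a (i + 1)), Fin.coeSucc_eq_succ,
    Fin.last_add_one]
  by_cases hb : b (Fin.last n) = a 0 <;> simp [hb]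

/-- Formanek's central polynomial in `x` and `y₀, …, yₙ`, for matrices of size `n + 1`: the sum over
all cyclic rotations of the `yᵢ` of the words weighted by `formanekWeight n`. It makes sense in any
algebra, and in the free algebra it is the polynomial itself. -/
noncomputable def formanek (n : ℕ) (S : Type*) {A : Type*} [CommRing S] [Ring A] [Algebra S A]
    (x : A) : MultilinearMap S (fun _ : Fin (n + 1) ↦ A) A :=
  ∑ k : Fin (n + 1), (interleave S (formanekWeight n) x).domDomCongr (Equiv.addRight k)

theorem formanek_apply (S : Type*) {A : Type*} [CommRing S] [Ring A] [Algebra S A] (x : A)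
    (y : Fin (n + 1) → A) :
    formanek n S x y = ∑ k, interleave S (formanekWeight n) x (fun i ↦ y (i + k)) := by
  simp [formanek]

theorem map_formanek {S T A B : Type*} [CommRing S] [CommRing T] [Ring A] [Ring B] [Algebra S A]
    [Algebra T B] (φ : A →+* B) (x : A) (y : Fin (n + 1) → A) :
    φ (formanek n S x y) = formanek n T (φ x) (φ ∘ y) := by
  simp [formanek_apply, map_interleave (T := T), Function.comp_def]

theorem formanek_diagonal_single {R : Type*} [CommRing R] (l : Fin (n + 1) → R)
    (a b : Fin (n + 1) → Fin (n + 1)) :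
    formanek n R (diagonal l) (fun i ↦ single (a i) (b i) 1) =
      if ∀ i, b i = a (i + 1) then diffProd (l ∘ a) • 1 else 0 := by
  have shift (k : Fin (n + 1)) :
      interleave R (formanekWeight n) (diagonal l) (fun i ↦ single (a (i + k)) (b (i + k)) 1) =
        if ∀ i, b i = a (i + 1) then diffProd (l ∘ a) • single (a k) (a k) 1 else 0 := by
    rw [interleave_formanekWeight_diagonal_single l (fun i ↦ a (i + k)) (fun i ↦ b (i + k)),
      show l ∘ (fun i ↦ a (i + k)) = (l ∘ a) ∘ Equiv.addRight k from rfl, diffProd_comp_equiv]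
    simp only [add_right_comm _ 1 k, zero_add]
    congr 1
    exact propext ((Equiv.addRight k).forall_congr_right (q := fun i ↦ b i = a (i + 1)))
  simp only [formanek_apply, shift]
  split_ifs
  · rw [← Finset.smul_sum]
    by_cases ha : Function.Injective a
    · rw [(Finite.injective_iff_bijective.1 ha).sum_comp (fun i ↦ single i i (1 : R)),
        sum_single_one]
    · rw [diffProd_eq_zero fun h ↦ ha h.of_comp, zero_smul, zero_smul]
  · simp

end Formanek

section Separable

variable {ι : Type*} [Fintype ι] [DecidableEq ι]

theorem exists_algEquiv_diagonal_of_charpoly_separable {K : Type*} [Field K] [IsAlgClosed K]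
    (x : Matrix ι ι K) (hx : x.charpoly.Separable) :
    ∃ (φ : Matrix ι ι K ≃ₐ[K] Matrix ι ι K) (l : ι → K),
      Function.Injective l ∧ φ (diagonal l) = x := by
  have hcard : Fintype.card ι = Fintype.card (x.charpoly.rootSet K) := by
    rw [card_rootSet_eq_natDegree hx (IsAlgClosed.splits _), x.charpoly_natDegree_eq_dim]
  let e := Fintype.equivOfCardEq hcard
  let l (i : ι) : K := e i
  have hl : Function.Injective l := Subtype.val_injective.comp e.injective
  have heig (i : ι) : Module.End.HasEigenvalue (toLin' x) (l i) := by
    rw [Module.End.hasEigenvalue_iff_isRoot_charpoly, charpoly_toLin']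
    simpa [IsRoot] using (mem_rootSet.1 (e i).2).2
  choose v hv using fun i ↦ (heig i).exists_hasEigenvector
  have hli := Module.End.eigenvectors_linearIndependent' _ l hl v hv
  let b : Module.Basis ι K (ι → K) := basisOfLinearIndependentOfCardEqFinrank' v hli (by simp)
  have hb (j : ι) : b j = v j := by simp [b]
  refine ⟨(toLinAlgEquiv b).trans LinearMap.toMatrixAlgEquiv', l, hl, ?_⟩
  rw [AlgEquiv.trans_apply, ← LinearMap.toMatrixAlgEquiv'_toLinAlgEquiv' x]
  congr 1
  refine b.ext fun j ↦ ?_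
  rw [toLinAlgEquiv_self, hb, toLinAlgEquiv'_apply, ← toLin'_apply, (hv j).apply_eq_smul]
  simp [diagonal_apply, hb]

theorem exists_irreducible_charpoly_of_finite (F : Type*) [Field F] [Finite F] [Nonempty ι] :
    ∃ x : Matrix ι ι F, Irreducible x.charpoly := by
  obtain ⟨p, _⟩ := CharP.exists F
  have : Fact p.Prime := ⟨CharP.char_is_prime F p⟩
  have : NeZero (Fintype.card ι) := ⟨Fintype.card_ne_zero⟩
  let pb := Field.powerBasisOfFiniteOfSeparable F (FiniteField.Extension F p (Fintype.card ι))
  let e : Fin pb.dim ≃ ι := Fintype.equivOfCardEq <| by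
    rw [Fintype.card_fin, ← pb.finrank, FiniteField.finrank_extension]
  refine ⟨reindex e e (Algebra.leftMulMatrix pb.basis pb.gen), ?_⟩
  rw [charpoly_reindex, charpoly_leftMulMatrix]
  exact minpoly.irreducible (Algebra.IsIntegral.isIntegral _)

theorem exists_separable_charpoly (F : Type*) [Field F] [Nonempty ι] :
    ∃ x : Matrix ι ι F, x.charpoly.Separable := by
  cases finite_or_infinite F
  · obtain ⟨x, hx⟩ := exists_irreducible_charpoly_of_finite (ι := ι) F
    exact ⟨x, PerfectField.separable_of_irreducible hx⟩
  · let l : ι ↪ F := (Fintype.equivFin ι).toEmbedding.trans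
      (Fin.valEmbedding.trans (Infinite.natEmbedding F))
    refine ⟨diagonal l, ?_⟩
    rw [charpoly_diagonal, separable_prod_X_sub_C_iff]
    exact l.injective

end Separable

section Generic

universe u v

variable {σ ι : Type*}

variable (ι) in
/-- The generic matrix with index `s`: its entries are independent commuting variables over `ℤ`. -/
noncomputable def genericMatrix (s : σ) : Matrix ι ι (MvPolynomial (σ × ι × ι) ℤ) :=
  of fun i j ↦ MvPolynomial.X (s, i, j)

/-- The specialization of the entries of the generic matrices to the entries of a family of matrices
over a commutative ring. -/
noncomputable def genericEval {R : Type*} [CommRing R] (a : σ → Matrix ι ι R) :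
    MvPolynomial (σ × ι × ι) ℤ →+* R :=
  MvPolynomial.eval₂Hom (Int.castRingHom R) fun t ↦ a t.1 t.2.1 t.2.2

variable [Fintype ι] [DecidableEq ι]

theorem genericEval_mapMatrix_genericMatrix {R : Type*} [CommRing R] (a : σ → Matrix ι ι R)
    (s : σ) : (genericEval a).mapMatrix (genericMatrix ι s) = a s := by
  ext
  simp [genericEval, genericMatrix]

theorem irreducible_charpoly_genericMatrix [Nonempty ι] (s : σ) :
    Irreducible (genericMatrix ι s).charpoly := by
  obtain ⟨x, hx⟩ := exists_irreducible_charpoly_of_finite (ι := ι) (ZMod 2)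
  refine (charpoly_monic _).irreducible_of_irreducible_map (genericEval fun _ ↦ x) _ ?_
  rwa [← charpoly_map, ← RingHom.mapMatrix_apply, genericEval_mapMatrix_genericMatrix]

theorem separable_charpoly_map_genericMatrix [Nonempty ι] {K : Type*} [Field K] [CharZero K]
    {φ : MvPolynomial (σ × ι × ι) ℤ →+* K} (hφ : Function.Injective φ) (s : σ) :
    (φ.mapMatrix (genericMatrix ι s)).charpoly.Separable := by
  let L := FractionRing (MvPolynomial (σ × ι × ι) ℤ)
  have hL : ((genericMatrix ι s).charpoly.map (algebraMap _ L)).Separable :=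
    PerfectField.separable_of_irreducible <|
      (charpoly_monic _).irreducible_iff_irreducible_map_fraction_map.1
        (irreducible_charpoly_genericMatrix s)
  have hlift : (IsFractionRing.lift hφ).comp (algebraMap _ L) = φ :=
    IsLocalization.lift_comp _
  have := hL.map (f := IsFractionRing.lift hφ)
  rwa [Polynomial.map_map, hlift, ← charpoly_map] at this

theorem map_freeRing_lift {σ A B : Type*} [Ring A] [Ring B] (φ : A →+* B) (a : σ → A)
    (f : FreeRing σ) : φ (FreeRing.lift a f) = FreeRing.lift (φ ∘ a) f := by
  have : φ.comp (FreeRing.lift a) = FreeRing.lift (φ ∘ a) := by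
    ext; simp
  exact DFunLike.congr_fun this f

theorem freeRing_lift_eq_zero_of_separable {σ : Type u} {ι : Type v} [Fintype ι] [DecidableEq ι]
    [Nonempty ι] (f : FreeRing σ) (s : σ)
    (hf : ∀ (K : Type max u v) [Field K] [IsAlgClosed K] (a : σ → Matrix ι ι K),
      (a s).charpoly.Separable → FreeRing.lift a f = 0)
    {R : Type*} [CommRing R] (a : σ → Matrix ι ι R) : FreeRing.lift a f = 0 := by
  let P := MvPolynomial (σ × ι × ι) ℤ
  let L := FractionRing P
  let φ : P →+* AlgebraicClosure L := (algebraMap L (AlgebraicClosure L)).comp (algebraMap P L)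
  have hφ : Function.Injective φ :=
    (algebraMap L (AlgebraicClosure L)).injective.comp (IsFractionRing.injective P L)
  have hgen : FreeRing.lift (genericMatrix ι) f = 0 := by
    apply Matrix.map_injective hφ
    change φ.mapMatrix _ = φ.mapMatrix 0
    rw [map_freeRing_lift, map_zero]
    exact hf _ _ (separable_charpoly_map_genericMatrix hφ s)
  have ha : a = (genericEval a).mapMatrix ∘ genericMatrix ι :=
    funext fun s ↦ (genericEval_mapMatrix_genericMatrix a s).symm
  rw [ha, ← map_freeRing_lift, hgen, map_zero]

end Generic

section Central

theorem multilinearMap_ext_single {R M κ p q : Type*} [CommSemiring R] [AddCommMonoid M]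
    [Module R M] [Finite κ] [Finite p] [Finite q] [DecidableEq p] [DecidableEq q]
    {f g : MultilinearMap R (fun _ : κ ↦ Matrix p q R) M}
    (h : ∀ (a : κ → p) (b : κ → q),
      f (fun i ↦ single (a i) (b i) 1) = g (fun i ↦ single (a i) (b i) 1)) : f = g := by
  have := Fintype.ofFinite p
  have := Fintype.ofFinite q
  refine Module.Basis.ext_multilinear (fun _ ↦ stdBasis R p q) fun v ↦ ?_
  simpa only [← stdBasis_eq_single] using h (fun i ↦ (v i).1) fun i ↦ (v i).2

variable {n : ℕ}

theorem commute_formanek_diagonal {R : Type*} [CommRing R] (l : Fin (n + 1) → R)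
    (y : Fin (n + 1) → Matrix (Fin (n + 1)) (Fin (n + 1)) R)
    (z : Matrix (Fin (n + 1)) (Fin (n + 1)) R) : Commute (formanek n R (diagonal l) y) z := by
  suffices (LinearMap.mulRight R z).compMultilinearMap (formanek n R (diagonal l)) =
      (LinearMap.mulLeft R z).compMultilinearMap (formanek n R (diagonal l)) from
    congr($this y)
  refine multilinearMap_ext_single fun a b ↦ ?_
  simp only [LinearMap.compMultilinearMap_apply, formanek_diagonal_single]
  split_ifs <;> simp

theorem commute_formanek_of_charpoly_separable {K : Type*} [Field K] [IsAlgClosed K]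
    {x : Matrix (Fin (n + 1)) (Fin (n + 1)) K} (hx : x.charpoly.Separable)
    (y : Fin (n + 1) → Matrix (Fin (n + 1)) (Fin (n + 1)) K)
    (z : Matrix (Fin (n + 1)) (Fin (n + 1)) K) : Commute (formanek n K x y) z := by
  obtain ⟨φ, l, -, rfl⟩ := exists_algEquiv_diagonal_of_charpoly_separable x hx
  have h := (commute_formanek_diagonal l (φ.symm ∘ y) (φ.symm z)).map φ.toRingHom
  rw [map_formanek (T := K)] at h
  simpa [Function.comp_def] using h

/-- The commutator of the Formanek polynomial `formanek x y` with `z`, in the free ring on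
`x = inl 0`, `z = inl 1` and `y i = inr i`. Centrality of `formanek` on matrices is the statement
that this element vanishes on them. -/
noncomputable def formanekCommutator (n : ℕ) : FreeRing (Fin 2 ⊕ Fin (n + 1)) :=
  ⁅formanek n ℤ (FreeRing.of (.inl 0 : Fin 2 ⊕ Fin (n + 1))) fun i ↦ FreeRing.of (.inr i),
    FreeRing.of (.inl 1)⁆

theorem lift_formanekCommutator (S : Type*) {A : Type*} [CommRing S] [Ring A] [Algebra S A]
    (a : Fin 2 ⊕ Fin (n + 1) → A) :
    FreeRing.lift a (formanekCommutator n) =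
      ⁅formanek n S (a (.inl 0)) (a ∘ .inr), a (.inl 1)⁆ := by
  simp [formanekCommutator, Ring.lie_def, map_formanek (T := S), Function.comp_def]

theorem commute_formanek {R : Type*} [CommRing R] (x : Matrix (Fin (n + 1)) (Fin (n + 1)) R)
    (y : Fin (n + 1) → Matrix (Fin (n + 1)) (Fin (n + 1)) R)
    (z : Matrix (Fin (n + 1)) (Fin (n + 1)) R) : Commute (formanek n R x y) z := by
  have h := freeRing_lift_eq_zero_of_separable (formanekCommutator n) (.inl 0)
    (fun K _ _ a ha ↦ by
      rw [lift_formanekCommutator K]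
      exact (commute_formanek_of_charpoly_separable ha _ _).lie_eq)
    (Sum.elim ![x, z] y)
  rw [lift_formanekCommutator R] at h
  exact commute_iff_lie_eq.2 h

theorem formanek_diagonal_ne_zero {R : Type*} [CommRing R] [IsDomain R] {l : Fin (n + 1) → R}
    (hl : Function.Injective l) : formanek n R (diagonal l) ≠ 0 := by
  intro h
  have h₀ := congr($(formanek_diagonal_single l id (· + 1)) 0 0)
  simp [h, (diffProd_ne_zero hl).symm] at h₀

theorem formanek_ne_zero_of_charpoly_separable {K : Type*} [Field K] [IsAlgClosed K]
    {x : Matrix (Fin (n + 1)) (Fin (n + 1)) K} (hx : x.charpoly.Separable) :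
    formanek n K x ≠ 0 := by
  obtain ⟨φ, l, hl, rfl⟩ := exists_algEquiv_diagonal_of_charpoly_separable x hx
  refine fun h ↦ formanek_diagonal_ne_zero hl (MultilinearMap.ext fun y ↦ φ.injective ?_)
  have := map_formanek (S := K) (T := K) φ.toRingHom (diagonal l) y
  simpa [h] using this

theorem formanek_ne_zero_of_map {R S : Type*} [CommRing R] [CommRing S] (ψ : R →+* S)
    {x : Matrix (Fin (n + 1)) (Fin (n + 1)) R} (hx : formanek n S (ψ.mapMatrix x) ≠ 0) :
    formanek n R x ≠ 0 := by
  contrapose! hx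
  refine multilinearMap_ext_single fun a b ↦ ?_
  have := map_formanek (S := R) (T := S) ψ.mapMatrix x fun i ↦ single (a i) (b i) 1
  simpa [hx, Function.comp_def] using this.symm

theorem exists_formanek_ne_zero (n : ℕ) (R : Type*) [CommRing R] [Nontrivial R] :
    ∃ x : Matrix (Fin (n + 1)) (Fin (n + 1)) R, formanek n R x ≠ 0 := by
  obtain ⟨m, hm⟩ := Ideal.exists_maximal R
  let := Ideal.Quotient.field m
  let π := Ideal.Quotient.mk m
  let incl := algebraMap (R ⧸ m) (AlgebraicClosure (R ⧸ m))
  obtain ⟨x', hx'⟩ := exists_separable_charpoly (ι := Fin (n + 1)) (R ⧸ m)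
  obtain ⟨x, rfl⟩ : ∃ x, π.mapMatrix x = x' :=
    ⟨x'.map (Function.surjInv Ideal.Quotient.mk_surjective),
      ext fun _ _ ↦ Function.surjInv_eq _ _⟩
  refine ⟨x, formanek_ne_zero_of_map π (formanek_ne_zero_of_map incl ?_)⟩
  apply formanek_ne_zero_of_charpoly_separable
  rw [RingHom.mapMatrix_apply incl, charpoly_map]
  exact hx'.map

theorem exists_central_polynomial_general (R : Type*) [CommRing R] [Nontrivial R] (n : ℕ)
    (hn : 1 ≤ n) :
    ∃ (m : ℕ) (_ : 1 ≤ m) (f : FreeAlgebra R (Fin m)),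
      (FreeAlgebra.lift R (fun _ : Fin m => (0 : R))) f = 0 ∧
      (∀ a : Fin m → Matrix (Fin n) (Fin n) R,
        ∃ c : R, (FreeAlgebra.lift R a) f = c • (1 : Matrix (Fin n) (Fin n) R)) ∧
      (∃ a : Fin m → Matrix (Fin n) (Fin n) R, (FreeAlgebra.lift R a) f ≠ 0) := by
  obtain ⟨n, rfl⟩ := Nat.exists_eq_add_of_le' hn
  let f : FreeAlgebra R (Fin (n + 2)) :=
    formanek n R (FreeAlgebra.ι R 0) fun i : Fin (n + 1) ↦ FreeAlgebra.ι R i.succ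
  have lift_f {A : Type _} [Ring A] [Algebra R A] (a : Fin (n + 2) → A) :
      FreeAlgebra.lift R a f = formanek n R (a 0) fun i : Fin (n + 1) ↦ a i.succ := by
    simpa [Function.comp_def] using map_formanek (T := R) (FreeAlgebra.lift R a).toRingHom
      (FreeAlgebra.ι R 0) fun i : Fin (n + 1) ↦ FreeAlgebra.ι R i.succ
  refine ⟨n + 2, by omega, f, ?_, fun a ↦ ?_, ?_⟩
  · rw [lift_f]
    exact (formanek n R (0 : R)).map_zero
  · obtain ⟨c, hc⟩ := mem_range_scalar_of_commute_single fun i j _ ↦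
      (commute_formanek (a 0) (fun i ↦ a i.succ) (single i j 1)).symm
    exact ⟨c, by rw [lift_f, ← hc, scalar_apply, smul_one_eq_diagonal]⟩
  · obtain ⟨x, hx⟩ := exists_formanek_ne_zero n R
    obtain ⟨y, hxy⟩ := DFunLike.ne_iff.1 hx
    exact ⟨Fin.cons x y, by simpa [lift_f] using hxy⟩

end Central

/-- **Formanek–Razmyslov: existence of central polynomials for matrices.**
For every field `F` and every `n ≥ 1` there exist `m ≥ 1` and an element `f` of the free
associative algebra `F⟨x₁, …, x_m⟩` with zero constant term (i.e. killed by the algebra map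
to `F` sending all variables to `0`) such that every evaluation of `f` on `m`-tuples of
`n × n` matrices over `F` is a scalar matrix, while `f` is not a polynomial identity of
`Mₙ(F)`. -/
theorem exists_central_polynomial (F : Type*) [Field F] (n : ℕ) (hn : 1 ≤ n) :
    ∃ (m : ℕ) (_ : 1 ≤ m) (f : FreeAlgebra F (Fin m)),
      (FreeAlgebra.lift F (fun _ : Fin m => (0 : F))) f = 0 ∧
      (∀ a : Fin m → Matrix (Fin n) (Fin n) F,
        ∃ c : F, (FreeAlgebra.lift F a) f = c • (1 : Matrix (Fin n) (Fin n) F)) ∧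
      (∃ a : Fin m → Matrix (Fin n) (Fin n) F, (FreeAlgebra.lift F a) f ≠ 0) :=
  exists_central_polynomial_general F n hn
end
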